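/- Let m be a prime, and for each prime q ≤ m let 𝒜_q : ℚ_q → ℂ be locally constant on ℚ_q ∖ {0}. For each prime q ≤ m fix k_q ∈ {1,…,q−1}, an integer j_q ≥ 0, and a_q ∈ I_q, and define Ψ ∈ L²(Ã, μ̃) by Ψ(x) = ∏_{q≤m} ψ^{(0)}_{k_q; j_q a_q}(x_q) · ∏_{q>m} 1_{ℤ_q}(x_q). Let 𝒜 : Ã → ℂ, 𝒜(ξ) = ∏_{q≤m} 𝒜_q(ξ_q) · ∏_{q>m} 1_{ℤ_q}(ξ_q), and set AΨ := 𝓕̃^{−1}[𝒜 · 𝓕̃Ψ] (well defined, since 𝓕̃Ψ is bounded with compact support not meeting the set where some coordinate ξ_q, q ≤ m, vanishes). Then Ψ is an eigenfunction of A, i.e. AΨ = λΨ for some λ ∈ ℂ, if and only if for all choices of η_q ∈ ℤ_q (q ≤ m) one has ∏_{q≤m} 𝒜_q(q^{−j_q} η_q − q^{−j_q−1} k_q) = ∏_{q≤m} 𝒜_q(−q^{−j_q−1} k_q); in that case the eigenvalue is λ = ∏_{q≤m} 𝒜_q(−q^{−j_q−1} k_q). -/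

import Mathlib

open MeasureTheory Complex
open scoped Classical

noncomputable section

variable (p : ℕ) [Fact p.Prime]

instance : MeasurableSpace ℚ_[p] := borel _
instance : BorelSpace ℚ_[p] := ⟨rfl⟩

instance (q : Nat.Primes) : Fact (q : ℕ).Prime := ⟨q.2⟩

/-- The indicator function of `ℤ_p` inside `ℚ_p`. -/
def indZ (x : ℚ_[p]) : ℂ := if ‖x‖ ≤ 1 then 1 else 0

/-- The fractional part of a `p`-adic number: the unique rational `r ∈ ℤ[1/p] ∩ [0,1)`
with `x - r ∈ ℤ_p`. -/
def padicFract (x : ℚ_[p]) : ℚ :=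
  if h : ∃ r : ℚ, (0 ≤ r ∧ r < 1 ∧ ∃ (m : ℤ) (n : ℕ), r = m / p ^ n) ∧ ‖x - (r : ℚ_[p])‖ ≤ 1
  then h.choose else 0

/-- The standard additive character `χ_p` of `ℚ_p`. -/
def padicChar (x : ℚ_[p]) : ℂ := Complex.exp (2 * Real.pi * Complex.I * (padicFract p x : ℂ))

/-- The Kozyrev wavelet `ψ⁰_{k;ja}`. -/
def kozyrev (k : ℕ) (j : ℤ) (a : ℚ_[p]) (x : ℚ_[p]) : ℂ :=
  ((p : ℝ) ^ ((j : ℝ) / 2) : ℝ) *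
    padicChar p ((k : ℚ_[p]) / (p : ℚ_[p]) * ((p : ℚ_[p]) ^ (-j) * x - a)) *
    indZ p ((p : ℚ_[p]) ^ (-j) * x - a)

/-- The set `I_p = ℤ[1/p] ∩ [0,1)` of shifts, viewed inside `ℚ_p`. -/
def Ip : Set ℚ_[p] := {a | ∃ (m n : ℕ), m < p ^ n ∧ a = (m : ℚ_[p]) / (p : ℚ_[p]) ^ n}


/-- The finite adele ring of `ℚ`: the restricted product of the fields `ℚ_p` with respect
to the subrings `ℤ_p`. -/
def FiniteAdele : Type :=
  {x : ∀ q : Nat.Primes, ℚ_[(q : ℕ)] // ∀ᶠ q : Nat.Primes in Filter.cofinite, ‖x q‖ ≤ 1}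

instance : MeasurableSpace FiniteAdele := by unfold FiniteAdele; infer_instance

/-- The standard additive character `χ̃` of `Ã`, evaluated at `ξ·x`:
`χ̃(ξ·x) = ∏_q χ_q(ξ_q x_q)`. -/
def chiTilde (ξ x : FiniteAdele) : ℂ :=
  ∏' q : Nat.Primes, padicChar q (ξ.1 q * x.1 q)

/-- The Fourier transform on `Ã`: `𝓕̃f(ξ) = ∫ χ̃(ξ·x) f(x) dμ̃(x)` (as an integral; on
`L¹ ∩ L²` it agrees with the unitary `L²` Fourier transform). -/
def Ftilde (μ : MeasureTheory.Measure FiniteAdele) (f : FiniteAdele → ℂ)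
    (ξ : FiniteAdele) : ℂ :=
  ∫ x, chiTilde ξ x * f x ∂μ

/-- The inverse Fourier transform on `Ã`: `𝓕̃⁻¹f(x) = ∫ χ̃(-ξ·x) f(ξ) dμ̃(ξ)`. -/
def FtildeInv (μ : MeasureTheory.Measure FiniteAdele) (f : FiniteAdele → ℂ)
    (x : FiniteAdele) : ℂ :=
  ∫ ξ, (∏' q : Nat.Primes, padicChar q (-(ξ.1 q * x.1 q))) * f ξ ∂μ

/-- The adelic wavelet `Ψ(x) = ∏_{q ≤ m} ψ⁰_{k_q;j_q a_q}(x_q) ∏_{q > m} 1_{ℤ_q}(x_q)`. -/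
def PsiWav (m : Nat.Primes) (k : Nat.Primes → ℕ) (j : Nat.Primes → ℤ)
    (a : ∀ q : Nat.Primes, ℚ_[(q : ℕ)]) (x : FiniteAdele) : ℂ :=
  ∏' q : Nat.Primes,
    (if (q : ℕ) ≤ (m : ℕ) then kozyrev q (k q) (j q) (a q) (x.1 q)
     else indZ q (x.1 q))

/-- The symbol `𝒜(ξ) = ∏_{q ≤ m} 𝒜_q(ξ_q) ∏_{q > m} 1_{ℤ_q}(ξ_q)`. -/
def symbA (m : Nat.Primes) (A : ∀ q : Nat.Primes, ℚ_[(q : ℕ)] → ℂ)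
    (ξ : FiniteAdele) : ℂ :=
  ∏' q : Nat.Primes,
    (if (q : ℕ) ≤ (m : ℕ) then A q (ξ.1 q) else indZ q (ξ.1 q))

section LocalLemmas

variable {p}

/-- Rational numbers of the form `m / p ^ n`. -/
def IsPRat (p : ℕ) (r : ℚ) : Prop := ∃ (m : ℤ) (n : ℕ), r = m / p ^ n

lemma pRat_int_of_norm_le {r : ℚ} (hr : IsPRat p r) (h : ‖(r : ℚ_[p])‖ ≤ 1) :
    ∃ z : ℤ, r = z := by
  obtain ⟨m, n, rfl⟩ := hr
  have hp0 : (p : ℚ) ≠ 0 := by exact_mod_cast (Fact.out : p.Prime).ne_zero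
  have hpp : (0 : ℝ) < p := by exact_mod_cast (Fact.out : p.Prime).pos
  have h2 : ‖(m : ℚ_[p])‖ ≤ (p : ℝ) ^ (-n : ℤ) := by
    push_cast at h
    rw [norm_div, norm_pow, Padic.norm_p] at h
    rw [div_le_one (by positivity)] at h
    rw [zpow_neg, zpow_natCast, ← inv_pow]
    exact h
  rw [Padic.norm_int_le_pow_iff_dvd] at h2
  obtain ⟨c, hc⟩ := h2
  refine ⟨c, ?_⟩
  rw [hc]; push_cast; field_simp

lemma IsPRat.add {r s : ℚ} (hr : IsPRat p r) (hs : IsPRat p s) : IsPRat p (r + s) := by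
  obtain ⟨m, n, rfl⟩ := hr
  obtain ⟨m', n', rfl⟩ := hs
  have hp0 : (p : ℚ) ≠ 0 := by exact_mod_cast (Fact.out : p.Prime).ne_zero
  refine ⟨m * p ^ n' + m' * p ^ n, n + n', ?_⟩
  push_cast
  field_simp
  ring

lemma IsPRat.neg {r : ℚ} (hr : IsPRat p r) : IsPRat p (-r) := by
  obtain ⟨m, n, rfl⟩ := hr
  exact ⟨-m, n, by push_cast; ring⟩

lemma exists_fract (x : ℚ_[p]) : ∃ r : ℚ, (0 ≤ r ∧ r < 1 ∧ ∃ (m : ℤ) (n : ℕ), r = m / p ^ n) ∧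
    ‖x - (r : ℚ_[p])‖ ≤ 1 := by
  have hp1 : (1 : ℝ) < p := by exact_mod_cast (Fact.out : p.Prime).one_lt
  have hp0 : (p : ℚ_[p]) ≠ 0 := by exact_mod_cast (Fact.out : p.Prime).ne_zero
  obtain ⟨n, hn⟩ := pow_unbounded_of_one_lt ‖x‖ hp1
  have hx : ‖(p : ℚ_[p]) ^ n * x‖ ≤ 1 := by
    rw [norm_mul, norm_pow, Padic.norm_p, inv_pow, inv_mul_le_iff₀ (by positivity)]
    linarith
  let z : ℤ_[p] := ⟨(p : ℚ_[p]) ^ n * x, hx⟩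
  have h1 := (PadicInt.norm_le_pow_iff_mem_span_pow (z - (z.appr n : ℤ_[p])) n).mpr (z.appr_spec n)
  have h2 := z.appr_lt n
  refine ⟨(z.appr n : ℚ) / p ^ n, ⟨by positivity, ?_, ⟨z.appr n, n, by simp⟩⟩, ?_⟩
  · rw [div_lt_one (by have := (Fact.out : p.Prime).pos; positivity)]
    exact_mod_cast h2
  · have h3 : ‖(p : ℚ_[p]) ^ n * x - (z.appr n : ℚ_[p])‖ ≤ (p : ℝ) ^ (-n : ℤ) := by
      have := h1
      rw [PadicInt.norm_def] at this
      push_cast at this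
      exact this
    have h4 : x - (((z.appr n : ℚ) / p ^ n : ℚ) : ℚ_[p])
        = ((p : ℚ_[p]) ^ n)⁻¹ * ((p : ℚ_[p]) ^ n * x - (z.appr n : ℚ_[p])) := by
      push_cast; field_simp
    rw [h4, norm_mul, norm_inv, norm_pow, Padic.norm_p, inv_pow, inv_inv]
    calc (p : ℝ) ^ n * _ ≤ (p : ℝ) ^ n * (p : ℝ) ^ (-n : ℤ) := by gcongr
      _ = 1 := by rw [zpow_neg, zpow_natCast]; field_simp

lemma padicFract_spec (x : ℚ_[p]) : (0 ≤ padicFract p x ∧ padicFract p x < 1 ∧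
    IsPRat p (padicFract p x)) ∧ ‖x - (padicFract p x : ℚ_[p])‖ ≤ 1 := by
  unfold padicFract
  rw [dif_pos (exists_fract x)]
  exact (exists_fract x).choose_spec

lemma norm_add_le_one {x y : ℚ_[p]} (hx : ‖x‖ ≤ 1) (hy : ‖y‖ ≤ 1) : ‖x + y‖ ≤ 1 :=
  (Padic.nonarchimedean x y).trans (max_le hx hy)

lemma norm_sub_le_one {x y : ℚ_[p]} (hx : ‖x‖ ≤ 1) (hy : ‖y‖ ≤ 1) : ‖x - y‖ ≤ 1 := by
  rw [sub_eq_add_neg]; exact norm_add_le_one hx (by simpa using hy)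

lemma exp_int_eq (z : ℤ) : Complex.exp (2 * Real.pi * Complex.I * ((z : ℚ) : ℂ)) = 1 := by
  rw [Complex.exp_eq_one_iff]; exact ⟨z, by push_cast; ring⟩

lemma padicChar_add (x y : ℚ_[p]) : padicChar p (x + y) = padicChar p x * padicChar p y := by
  obtain ⟨⟨-, -, hx⟩, hx'⟩ := padicFract_spec x
  obtain ⟨⟨-, -, hy⟩, hy'⟩ := padicFract_spec y
  obtain ⟨⟨-, -, hz⟩, hz'⟩ := padicFract_spec (x + y)
  obtain ⟨z, h⟩ := pRat_int_of_norm_le (p := p) ((hz.add hx.neg).add hy.neg) (by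
    have := norm_sub_le_one (norm_add_le_one hx' hy') hz'
    convert this using 2
    push_cast; ring)
  have h' : padicFract p (x + y) = padicFract p x + padicFract p y + z := by linarith
  unfold padicChar
  rw [h', ← Complex.exp_add]
  have := exp_int_eq z
  push_cast at this ⊢
  rw [mul_add, Complex.exp_add, this, mul_one, mul_add]

lemma padicChar_eq_one_iff (x : ℚ_[p]) : padicChar p x = 1 ↔ ‖x‖ ≤ 1 := by
  obtain ⟨⟨h0, h1, hx⟩, hx'⟩ := padicFract_spec x
  constructor
  · intro h
    unfold padicChar at h
    rw [Complex.exp_eq_one_iff] at h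
    obtain ⟨n, hn⟩ := h
    have h2 : ((padicFract p x : ℚ) : ℂ) = ((n : ℚ) : ℂ) := by
      have hpi : (2 * Real.pi * Complex.I : ℂ) ≠ 0 := Complex.two_pi_I_ne_zero
      apply mul_left_cancel₀ hpi
      rw [hn]; push_cast; ring
    have h3 : padicFract p x = n := by exact_mod_cast h2
    rw [h3] at h0 h1
    have : n = 0 := by
      have a : (0:ℤ) ≤ n := by exact_mod_cast h0
      have b : n < 1 := by exact_mod_cast h1
      omega
    rw [h3, this] at hx'
    simpa using hx'
  · intro h
    obtain ⟨z, hz⟩ := pRat_int_of_norm_le (p := p) hx (by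
      have := norm_sub_le_one h hx'
      simpa using this)
    unfold padicChar
    rw [hz]; exact exp_int_eq z

lemma padicChar_norm (x : ℚ_[p]) : ‖padicChar p x‖ = 1 := by
  unfold padicChar
  have : (2 * Real.pi * Complex.I * (padicFract p x : ℂ))
    = ((2 * Real.pi * (padicFract p x : ℝ) : ℝ) : ℂ) * Complex.I := by push_cast; ring
  rw [this, Complex.norm_exp_ofReal_mul_I]

lemma padicChar_zero : padicChar p (0 : ℚ_[p]) = 1 := by
  rw [padicChar_eq_one_iff]; simp

lemma padicChar_nsmul (n : ℕ) (x : ℚ_[p]) : padicChar p (n * x) = padicChar p x ^ n := by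
  induction n with
  | zero => simp [padicChar_zero]
  | succ n ih => push_cast; rw [add_mul, one_mul, padicChar_add, ih, pow_succ]

lemma continuous_of_periodic {f : ℚ_[p] → ℂ} (h : ∀ x s, ‖s‖ ≤ 1 → f (x + s) = f x) :
    Continuous f := by
  apply IsLocallyConstant.continuous
  rw [IsLocallyConstant.iff_eventually_eq]
  intro x
  filter_upwards [Metric.ball_mem_nhds x one_pos] with y hy
  rw [Metric.mem_ball, dist_eq_norm] at hy
  have := h x (y - x) hy.le
  simpa using this

lemma padicChar_periodic (x s : ℚ_[p]) (hs : ‖s‖ ≤ 1) : padicChar p (x + s) = padicChar p x := by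
  rw [padicChar_add, (padicChar_eq_one_iff s).2 hs, mul_one]

lemma norm_add_iff {x s : ℚ_[p]} (hs : ‖s‖ ≤ 1) : ‖x + s‖ ≤ 1 ↔ ‖x‖ ≤ 1 :=
  ⟨fun h => by simpa using norm_sub_le_one h hs, fun h => norm_add_le_one h hs⟩

lemma indZ_periodic (x s : ℚ_[p]) (hs : ‖s‖ ≤ 1) : indZ p (x + s) = indZ p x := by
  unfold indZ
  simp only [norm_add_iff hs]

lemma continuous_padicChar : Continuous (padicChar p) := continuous_of_periodic padicChar_periodic
lemma continuous_indZ : Continuous (indZ p) := continuous_of_periodic indZ_periodic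

lemma measurable_padicChar : Measurable (padicChar p) := continuous_padicChar.measurable
lemma measurable_indZ : Measurable (indZ p) := continuous_indZ.measurable

variable (ν : Measure ℚ_[p]) [ν.IsAddHaarMeasure]

lemma indZ_eq_indicator (f : ℚ_[p] → ℂ) :
    (fun x => f x * indZ p x) = Set.indicator {x | ‖x‖ ≤ 1} f := by
  ext x
  by_cases h : ‖x‖ ≤ 1 <;> simp [indZ, h]

lemma isCompact_unit : IsCompact {x : ℚ_[p] | ‖x‖ ≤ 1} := by
  have := isCompact_closedBall (0 : ℚ_[p]) 1
  convert this using 1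
  ext x; simp

lemma measurableSet_unit : MeasurableSet {x : ℚ_[p] | ‖x‖ ≤ 1} :=
  isCompact_unit.isClosed.measurableSet

lemma integrable_mul_indZ {f : ℚ_[p] → ℂ} (hf : ContinuousOn f {x | ‖x‖ ≤ 1}) :
    Integrable (fun x => f x * indZ p x) ν := by
  rw [indZ_eq_indicator, integrable_indicator_iff measurableSet_unit]
  exact hf.integrableOn_compact isCompact_unit

lemma integral_char_indZ (hν : ν {x | ‖x‖ ≤ 1} = 1) (s : ℚ_[p]) :
    ∫ t, padicChar p (s * t) * indZ p t ∂ν = indZ p s := by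
  by_cases hs : ‖s‖ ≤ 1
  · have : (fun t => padicChar p (s * t) * indZ p t)
        = Set.indicator {x : ℚ_[p] | ‖x‖ ≤ 1} (fun _ => (1 : ℂ)) := by
      rw [← indZ_eq_indicator]
      ext t
      by_cases ht : ‖t‖ ≤ 1
      · rw [(padicChar_eq_one_iff _).2]
        rw [norm_mul]
        exact mul_le_one₀ hs (norm_nonneg _) ht
      · simp [indZ, ht]
    rw [this, integral_indicator measurableSet_unit]
    simp [indZ, hs, Measure.real, hν]
  · have h1 := integral_add_right_eq_self (μ := ν) (fun t => padicChar p (s * t) * indZ p t) 1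
    simp only [mul_add, padicChar_add, indZ_periodic _ (1 : ℚ_[p]) (by simp), mul_one] at h1
    have h2 : ∀ t, padicChar p (s * t) * padicChar p s * indZ p t
      = padicChar p s * (padicChar p (s * t) * indZ p t) := fun t => by ring
    simp only [h2] at h1
    rw [integral_const_mul] at h1
    have h3 : padicChar p s ≠ 1 := fun h => hs ((padicChar_eq_one_iff s).1 h)
    have h4 : (padicChar p s - 1) * ∫ t, padicChar p (s * t) * indZ p t ∂ν = 0 := by
      rw [sub_mul, h1]; ring
    rcases mul_eq_zero.1 h4 with h5 | h5
    · exact absurd (sub_eq_zero.1 h5) h3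
    · rw [h5]; simp [indZ, hs]

lemma exists_scaling (c : ℚ_[p]) (hc : c ≠ 0) : ∃ κ : ℂ, κ ≠ 0 ∧
    ∀ f : ℚ_[p] → ℂ, ∫ y, f (c * y) ∂ν = κ * ∫ y, f y ∂ν := by
  let e : ℚ_[p] ≃+ ℚ_[p] := AddEquiv.mk' (Equiv.mulLeft₀ c hc) (fun a b => by simp [mul_add])
  have he : ∀ x, e x = c * x := fun x => rfl
  have hes : ∀ x, e.symm x = c⁻¹ * x := fun x => rfl
  have hce : Continuous e := by
    have : (e : ℚ_[p] → ℚ_[p]) = fun x => c * x := rfl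
    rw [this]; fun_prop
  have hces : Continuous e.symm := by
    have : (e.symm : ℚ_[p] → ℚ_[p]) = fun x => c⁻¹ * x := rfl
    rw [this]; fun_prop
  have := e.isAddHaarMeasure_map ν hce hces
  have h := Measure.isAddLeftInvariant_eq_smul (Measure.map e ν) ν
  have hpos := Measure.addHaarScalarFactor_pos_of_isAddHaarMeasure (Measure.map e ν) ν
  refine ⟨((Measure.addHaarScalarFactor (Measure.map e ν) ν : ℝ) : ℂ), ?_, fun f => ?_⟩
  · exact_mod_cast hpos.ne'
  · have hme : MeasurableEmbedding e :=
      (Homeomorph.mk e.toEquiv hce hces).measurableEmbedding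
    have h2 : ∫ y, f (c * y) ∂ν = ∫ y, f y ∂(Measure.map e ν) := by
      rw [hme.integral_map]; rfl
    generalize Measure.addHaarScalarFactor (Measure.map e ν) ν = κ at h
    rw [h2, h, integral_smul_nnreal_measure]
    simp [NNReal.smul_def]

end LocalLemmas

section LocalFourier

variable {p}
variable (ν : Measure ℚ_[p]) [ν.IsAddHaarMeasure]

/-- The Fourier transform of `b · 1_{ℤ_p}`. -/
def hatB (b : ℚ_[p] → ℂ) (t : ℚ_[p]) : ℂ := ∫ η, padicChar p (-t * η) * b η * indZ p η ∂ν

lemma cast_p_ne_zero : (p : ℚ_[p]) ≠ 0 := by exact_mod_cast (Fact.out : p.Prime).ne_zero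

lemma padicChar_neg_mul (x : ℚ_[p]) : padicChar p (-x) * padicChar p x = 1 := by
  rw [← padicChar_add]; simp [padicChar_zero]

lemma ft_kozyrev (hν : ν {x | ‖x‖ ≤ 1} = 1) (k : ℕ) (j : ℤ) (a : ℚ_[p]) :
    ∃ κ : ℂ, κ ≠ 0 ∧ (∀ f : ℚ_[p] → ℂ, ∫ y, f ((p : ℚ_[p]) ^ j * y) ∂ν = κ * ∫ y, f y ∂ν) ∧
    ∀ ξ, ∫ x, padicChar p (ξ * x) * kozyrev p k j a x ∂ν
      = κ⁻¹ * ((p : ℝ) ^ ((j : ℝ) / 2) : ℝ) * padicChar p (ξ * (p : ℚ_[p]) ^ j * a)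
        * indZ p (ξ * (p : ℚ_[p]) ^ j + k / p) := by
  have hp := cast_p_ne_zero (p := p)
  obtain ⟨κ, hκ, h⟩ := exists_scaling ν ((p : ℚ_[p]) ^ j) (zpow_ne_zero _ hp)
  refine ⟨κ, hκ, h, fun ξ => ?_⟩
  have h1 := h (fun x => padicChar p (ξ * x) * kozyrev p k j a x)
  have h2 := integral_add_right_eq_self (μ := ν)
    (fun y => padicChar p (ξ * ((p : ℚ_[p]) ^ j * y)) * kozyrev p k j a ((p : ℚ_[p]) ^ j * y)) a
  rw [← h2] at h1
  have h3 : ∀ y, padicChar p (ξ * ((p : ℚ_[p]) ^ j * (y + a)))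
      * kozyrev p k j a ((p : ℚ_[p]) ^ j * (y + a))
      = (((p : ℝ) ^ ((j : ℝ) / 2) : ℝ) * padicChar p (ξ * (p : ℚ_[p]) ^ j * a)) *
        (padicChar p ((ξ * (p : ℚ_[p]) ^ j + k / p) * y) * indZ p y) := by
    intro y
    have e1 : (p : ℚ_[p]) ^ (-j) * ((p : ℚ_[p]) ^ j * (y + a)) - a = y := by
      rw [← mul_assoc, ← zpow_add₀ hp]; simp
    unfold kozyrev
    rw [e1, show ξ * ((p : ℚ_[p]) ^ j * (y + a))
      = ξ * (p : ℚ_[p]) ^ j * a + ξ * (p : ℚ_[p]) ^ j * y by ring, add_mul,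
      padicChar_add, padicChar_add]
    ring
  simp only [h3] at h1
  rw [integral_const_mul, integral_char_indZ ν hν] at h1
  rw [mul_assoc, mul_assoc, ← mul_assoc (_ : ℂ) (padicChar p _), h1]
  field_simp

lemma local_G (hν : ν {x | ‖x‖ ≤ 1} = 1) (A : ℚ_[p] → ℂ) (k : ℕ) (j : ℤ) (a : ℚ_[p])
    (x : ℚ_[p]) :
    ∫ ξ, padicChar p (-x * ξ) * (A ξ * ∫ y, padicChar p (ξ * y) * kozyrev p k j a y ∂ν) ∂ν
    = ((p : ℝ) ^ ((j : ℝ) / 2) : ℝ) *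
      padicChar p ((k : ℚ_[p]) / (p : ℚ_[p]) * ((p : ℚ_[p]) ^ (-j) * x - a)) *
      hatB ν (fun η => A ((p : ℚ_[p]) ^ (-j) * η - (p : ℚ_[p]) ^ (-j - 1) * k))
        ((p : ℚ_[p]) ^ (-j) * x - a) := by
  have hp := cast_p_ne_zero (p := p)
  obtain ⟨κ, hκ, h, hF⟩ := ft_kozyrev ν hν k j a
  simp only [hF]
  have hpj : (p : ℚ_[p]) ^ j * (p : ℚ_[p]) ^ (-j) = 1 := by rw [← zpow_add₀ hp]; simp
  have hpj' : (p : ℚ_[p]) ^ (-j) * (p : ℚ_[p]) ^ j = 1 := by rw [← zpow_add₀ hp]; simp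
  have hpj1 : (p : ℚ_[p]) ^ (-j - 1) = (p : ℚ_[p]) ^ (-j) / p := by
    rw [zpow_sub₀ hp, zpow_one]
  set g : ℚ_[p] → ℂ := fun ξ => padicChar p (-x * ξ) *
    (A ξ * (κ⁻¹ * ((p : ℝ) ^ ((j : ℝ) / 2) : ℝ) * padicChar p (ξ * (p : ℚ_[p]) ^ j * a)
        * indZ p (ξ * (p : ℚ_[p]) ^ j + k / p))) with hg
  have h1 := h (fun y => g ((p : ℚ_[p]) ^ (-j) * y))
  simp only [← mul_assoc, hpj', one_mul] at h1
  rw [h1]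
  have h2 := integral_sub_right_eq_self (μ := ν) (fun y => g ((p : ℚ_[p]) ^ (-j) * y))
    ((k : ℚ_[p]) / p)
  rw [← h2]
  unfold hatB
  rw [← integral_const_mul, ← integral_const_mul]
  congr 1
  ext η
  simp only [hg]
  have e1 : (p : ℚ_[p]) ^ (-j) * (η - k / p) * (p : ℚ_[p]) ^ j = η - k / p := by
    rw [mul_right_comm, hpj', one_mul]
  rw [e1, sub_add_cancel, hpj1]
  have e2 : (p : ℚ_[p]) ^ (-j) * (η - k / p)
    = (p : ℚ_[p]) ^ (-j) * η - (p : ℚ_[p]) ^ (-j) / p * k := by ring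
  rw [e2]
  have e3 : padicChar p (-x * ((p : ℚ_[p]) ^ (-j) * η - (p : ℚ_[p]) ^ (-j) / p * k))
      * padicChar p ((η - k / p) * a)
      = padicChar p ((k : ℚ_[p]) / (p : ℚ_[p]) * ((p : ℚ_[p]) ^ (-j) * x - a))
        * padicChar p (-((p : ℚ_[p]) ^ (-j) * x - a) * η) := by
    rw [← padicChar_add, ← padicChar_add]; congr 1; ring
  calc _ = (κ * κ⁻¹) * (((p : ℝ) ^ ((j : ℝ) / 2) : ℝ) : ℂ)
      * (padicChar p (-x * ((p : ℚ_[p]) ^ (-j) * η - (p : ℚ_[p]) ^ (-j) / p * k))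
      * padicChar p ((η - k / p) * a))
      * A ((p : ℚ_[p]) ^ (-j) * η - (p : ℚ_[p]) ^ (-j) / p * k) * indZ p η := by ring
    _ = _ := by rw [e3, mul_inv_cancel₀ hκ]; ring

lemma hatB_periodic (b : ℚ_[p] → ℂ) (t s : ℚ_[p]) (hs : ‖s‖ ≤ 1) :
    hatB ν b (t + s) = hatB ν b t := by
  unfold hatB
  congr 1
  ext η
  by_cases hη : ‖η‖ ≤ 1
  · rw [neg_add, add_mul, padicChar_periodic]
    rw [norm_mul, norm_neg]
    exact mul_le_one₀ hs (norm_nonneg _) hη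
  · simp [indZ, hη]

lemma hatB_one (hν : ν {x | ‖x‖ ≤ 1} = 1) (t : ℚ_[p]) : hatB ν (fun _ => 1) t = indZ p t := by
  unfold hatB
  simp only [mul_one]
  rw [integral_char_indZ ν hν]
  simp [indZ]

lemma char_sum (s : ℚ_[p]) (hs : ‖s‖ ≤ 1) (N : ℕ) :
    ∑ i ∈ Finset.range (p ^ N), padicChar p (s * (i / (p : ℚ_[p]) ^ N))
      = if ‖s / (p : ℚ_[p]) ^ N‖ ≤ 1 then ((p : ℂ) ^ N) else 0 := by
  have hp := cast_p_ne_zero (p := p)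
  have e : ∀ i : ℕ, padicChar p (s * (i / (p : ℚ_[p]) ^ N))
      = padicChar p (s / (p : ℚ_[p]) ^ N) ^ i := by
    intro i
    rw [← padicChar_nsmul]; congr 1; ring
  simp only [e]
  split_ifs with h
  · simp [(padicChar_eq_one_iff _).2 h]
  · have hne : padicChar p (s / (p : ℚ_[p]) ^ N) ≠ 1 := fun h' => h ((padicChar_eq_one_iff _).1 h')
    rw [geom_sum_eq hne, ← padicChar_nsmul]
    have : ((p ^ N : ℕ) : ℚ_[p]) * (s / (p : ℚ_[p]) ^ N) = s := by push_cast; field_simp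
    rw [this, (padicChar_eq_one_iff _).2 hs]; simp

lemma sum_indZ (η : ℚ_[p]) (N : ℕ) :
    ∑ i ∈ Finset.range (p ^ N), padicChar p (η * (i / (p : ℚ_[p]) ^ N))
      * indZ p (i / (p : ℚ_[p]) ^ N) = 1 := by
  rw [Finset.sum_eq_single 0]
  · simp [padicChar_zero, indZ]
  · intro i hi h0
    have : ¬ ‖(i : ℚ_[p]) / (p : ℚ_[p]) ^ N‖ ≤ 1 := by
      intro h
      obtain ⟨z, hz⟩ := pRat_int_of_norm_le (p := p) (r := (i : ℚ) / p ^ N) ⟨i, N, by simp⟩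
        (by push_cast; exact h)
      have hpp : (0 : ℚ) < p ^ N := by have := (Fact.out : p.Prime).pos; positivity
      have h1 : (i : ℚ) / p ^ N < 1 := by
        rw [div_lt_one hpp]; exact_mod_cast Finset.mem_range.1 hi
      have h2 : 0 < (i : ℚ) / p ^ N := by
        have : (0 : ℚ) < i := by exact_mod_cast Nat.pos_of_ne_zero h0
        positivity
      rw [hz] at h1 h2
      have h3 : z < 1 := by exact_mod_cast h1
      have h4 : 0 < z := by exact_mod_cast h2
      omega
    rw [indZ, if_neg this, mul_zero]
  · intro h
    exact absurd (Finset.mem_range.2 (pow_pos (Fact.out : p.Prime).pos N)) h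

lemma sum_hatB_aux {b : ℚ_[p] → ℂ} (hb : ContinuousOn b {x | ‖x‖ ≤ 1}) (η₀ : ℚ_[p]) (N : ℕ) :
    ∑ i ∈ Finset.range (p ^ N), padicChar p (η₀ * (i / (p : ℚ_[p]) ^ N))
      * hatB ν b (i / (p : ℚ_[p]) ^ N) =
    ∫ η, (∑ i ∈ Finset.range (p ^ N), padicChar p ((η₀ - η) * (i / (p : ℚ_[p]) ^ N)))
      * b η * indZ p η ∂ν := by
  simp only [hatB, Finset.sum_mul]
  rw [integral_finsetSum]
  · refine Finset.sum_congr rfl fun i _ => ?_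
    rw [← integral_const_mul]
    congr 1
    ext η
    rw [sub_mul, sub_eq_add_neg, padicChar_add, ← mul_assoc, ← mul_assoc,
      neg_mul, mul_comm η]
  · intro i _
    apply integrable_mul_indZ
    refine ContinuousOn.mul ?_ hb
    exact (continuous_padicChar.comp (by fun_prop)).continuousOn

lemma sum_hatB (hν : ν {x | ‖x‖ ≤ 1} = 1)
    {b : ℚ_[p] → ℂ} (hb : ContinuousOn b {x | ‖x‖ ≤ 1}) (η₀ : ℚ_[p]) (h₀ : ‖η₀‖ ≤ 1) (N : ℕ)
    (hN : ∀ η, ‖η‖ ≤ 1 → ‖(η₀ - η) / (p : ℚ_[p]) ^ N‖ ≤ 1 → b η = b η₀) :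
    ∑ i ∈ Finset.range (p ^ N), padicChar p (η₀ * (i / (p : ℚ_[p]) ^ N))
      * hatB ν b (i / (p : ℚ_[p]) ^ N) = b η₀ := by
  have h1 := sum_hatB_aux ν (b := fun _ => 1) continuousOn_const η₀ N
  simp only [hatB_one ν hν, sum_indZ] at h1
  rw [sum_hatB_aux ν hb]
  rw [← mul_one (b η₀), h1, ← integral_const_mul]
  congr 1
  ext η
  by_cases hη : ‖η‖ ≤ 1
  · rw [char_sum _ (norm_sub_le_one h₀ hη)]
    split_ifs with h
    · rw [hN η hη h]; ring
    · simp
  · simp [indZ, hη]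

lemma exists_sum_hatB (hν : ν {x | ‖x‖ ≤ 1} = 1) {b : ℚ_[p] → ℂ}
    (hb : ∀ η, ‖η‖ ≤ 1 → ∀ᶠ y in nhds η, b y = b η) (η₀ : ℚ_[p]) (h₀ : ‖η₀‖ ≤ 1) : ∃ N : ℕ,
    ∑ i ∈ Finset.range (p ^ N), padicChar p (η₀ * (i / (p : ℚ_[p]) ^ N))
      * hatB ν b (i / (p : ℚ_[p]) ^ N) = b η₀ := by
  have hb' : ContinuousOn b {x | ‖x‖ ≤ 1} := by
    intro x hx
    apply ContinuousAt.continuousWithinAt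
    exact (continuousAt_const (y := b x)).congr ((hb x hx).mono fun y hy => hy.symm)
  obtain ⟨ε, hε, h⟩ := Metric.eventually_nhds_iff.1 (hb η₀ h₀)
  have hp1 : (1 : ℝ) < p := by exact_mod_cast (Fact.out : p.Prime).one_lt
  obtain ⟨N, hN⟩ := pow_unbounded_of_one_lt ε⁻¹ hp1
  refine ⟨N, sum_hatB ν hν hb' η₀ h₀ N fun η _ hη => h ?_⟩
  rw [dist_comm, dist_eq_norm]
  rw [norm_div, norm_pow, Padic.norm_p, inv_pow, div_inv_eq_mul] at hη
  have : ‖η₀ - η‖ ≤ ((p : ℝ) ^ N)⁻¹ := by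
    rw [← one_div, le_div_iff₀ (by positivity)]; exact hη
  exact this.trans_lt (inv_lt_of_inv_lt₀ hε hN)

end LocalFourier

section Adelic

variable {p}

/-- Functions `∏_{q ∈ T} f_q(x_q) ∏_{q ∉ T} 1_{ℤ_q}(x_q)`. -/
def locF (T : Finset Nat.Primes) (f : ∀ q : Nat.Primes, ℚ_[(q : ℕ)] → ℂ) (x : FiniteAdele) : ℂ :=
  (∏ q ∈ T, f q (x.1 q)) * (if ∀ q ∉ T, ‖x.1 q‖ ≤ 1 then 1 else 0)

lemma adele_bad (x : FiniteAdele) : {q : Nat.Primes | ¬ ‖x.1 q‖ ≤ 1}.Finite :=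
  Filter.eventually_cofinite.1 x.2

/-- The finite set of bad primes together with `T`. -/
def badSet (T : Finset Nat.Primes) (x : FiniteAdele) : Finset Nat.Primes :=
  T ∪ (adele_bad x).toFinset

lemma subset_badSet (T : Finset Nat.Primes) (x : FiniteAdele) : T ⊆ badSet T x :=
  Finset.subset_union_left

lemma norm_le_of_notMem_badSet {T : Finset Nat.Primes} {x : FiniteAdele} {q : Nat.Primes}
    (h : q ∉ badSet T x) : ‖x.1 q‖ ≤ 1 := by
  by_contra h'
  exact h (by simpa [badSet] using Or.inr (not_le.1 h'))

lemma tprod_eq_locF (T : Finset Nat.Primes) (f : ∀ q : Nat.Primes, ℚ_[(q : ℕ)] → ℂ)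
    (x : FiniteAdele) :
    ∏' q : Nat.Primes, (if q ∈ T then f q (x.1 q) else indZ q (x.1 q)) = locF T f x := by
  unfold locF
  split_ifs with h
  · rw [tprod_eq_prod (s := T), mul_one]
    · exact Finset.prod_congr rfl fun q hq => by rw [if_pos hq]
    · intro q hq
      rw [if_neg hq, indZ, if_pos (h q hq)]
  · push Not at h
    obtain ⟨q, hq, hx⟩ := h
    rw [tprod_eq_prod (s := badSet T x), mul_zero]
    · apply Finset.prod_eq_zero (i := q)
      · simp [badSet, hx]
      · rw [if_neg hq, indZ, if_neg hx.not_ge]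
    · intro q hq
      rw [if_neg (fun h => hq (subset_badSet T x h)), indZ, if_pos (norm_le_of_notMem_badSet hq)]

/-- enlarge the finite set. -/
lemma locF_enlarge {T T' : Finset Nat.Primes} (hT : T ⊆ T')
    (f : ∀ q : Nat.Primes, ℚ_[(q : ℕ)] → ℂ) (x : FiniteAdele) :
    locF T f x = locF T' (fun q y => if q ∈ T then f q y else indZ q y) x := by
  rw [← tprod_eq_locF, ← tprod_eq_locF]
  congr 1
  ext q
  by_cases h : q ∈ T
  · simp [h, hT h]
  · simp [h]

lemma measurable_coord (q : Nat.Primes) : Measurable (fun x : FiniteAdele => x.1 q) :=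
  (measurable_pi_apply q).comp measurable_subtype_coe

lemma measurableSet_U (T : Finset Nat.Primes) :
    MeasurableSet {x : FiniteAdele | ∀ q ∉ T, ‖x.1 q‖ ≤ 1} := by
  have : {x : FiniteAdele | ∀ q ∉ T, ‖x.1 q‖ ≤ 1}
      = ⋂ q : Nat.Primes, ⋂ (_ : q ∉ T), (fun x : FiniteAdele => x.1 q) ⁻¹' {y | ‖y‖ ≤ 1} := by
    ext x; simp
  rw [this]
  exact MeasurableSet.iInter fun q => MeasurableSet.iInter fun _ =>
    measurable_coord q measurableSet_unit

lemma integral_locF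
    (μp : ∀ q : Nat.Primes, MeasureTheory.Measure ℚ_[(q : ℕ)])
    (hHaar : ∀ q, (μp q).IsAddHaarMeasure)
    (μ : MeasureTheory.Measure FiniteAdele)
    (hμ : ∀ S : Finset Nat.Primes,
      ∀ B : ∀ q : Nat.Primes, Set ℚ_[(q : ℕ)], (∀ q, MeasurableSet (B q)) →
      μ {x : FiniteAdele | (∀ q ∈ S, x.1 q ∈ B q) ∧ ∀ q ∉ S, ‖x.1 q‖ ≤ 1}
        = ∏ q ∈ S, μp q (B q))
    (T : Finset Nat.Primes) (f : ∀ q : Nat.Primes, ℚ_[(q : ℕ)] → ℂ)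
    (hf : ∀ q ∈ T, Measurable (f q)) :
    ∫ x, locF T f x ∂μ = ∏ q ∈ T, ∫ y, f q y ∂(μp q) := by
  let π : FiniteAdele → (∀ q : T, ℚ_[((q : Nat.Primes) : ℕ)]) := fun x q => x.1 q
  have hπ : Measurable π := measurable_pi_lambda _ fun q => measurable_coord q
  let U : Set FiniteAdele := {x | ∀ q ∉ T, ‖x.1 q‖ ≤ 1}
  have hU : MeasurableSet U := measurableSet_U T
  have hmap : Measure.pi (fun q : T => μp q) = Measure.map π (μ.restrict U) := by
    symm
    refine (Measure.pi_eq fun B hB => ?_).symm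
    rw [Measure.map_apply hπ (MeasurableSet.univ_pi hB),
      Measure.restrict_apply (hπ (MeasurableSet.univ_pi hB))]
    have := hμ T (fun q => if h : q ∈ T then B ⟨q, h⟩ else Set.univ) (fun q => by
      by_cases h : q ∈ T
      · simp only [h, dite_true]; exact hB _
      · simp [h])
    rw [← Finset.prod_coe_sort T] at this
    convert this using 1
    · congr 1
      ext x
      simp only [Set.mem_inter_iff, Set.mem_preimage, Set.mem_pi, Set.mem_univ, true_imp_iff,
        Set.mem_ofPred_eq, U, π]
      refine and_congr_left fun _ => ?_
      constructor
      · intro h q hq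
        simp only [hq, dite_true]
        exact h ⟨q, hq⟩
      · intro h q
        have := h q.1 q.2
        simpa using this
    · simp
  have h1 : ∀ x, locF T f x = U.indicator (fun x => ∏ q : T, f q (π x q)) x := by
    intro x
    unfold locF
    rw [← Finset.prod_coe_sort T]
    by_cases h : ∀ q ∉ T, ‖x.1 q‖ ≤ 1
    · rw [Set.indicator_of_mem (show x ∈ U from h), if_pos h, mul_one]
    · rw [Set.indicator_of_notMem (show x ∉ U from h), if_neg h, mul_zero]
  simp only [h1]
  rw [integral_indicator hU, ← Finset.prod_coe_sort T]
  rw [← integral_fintype_prod_eq_prod (fun (q : T) => f q), hmap, integral_map hπ.aemeasurable]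
  apply Measurable.aestronglyMeasurable
  exact Finset.measurable_prod _ fun q _ => (hf q q.2).comp (measurable_pi_apply q)

lemma fourier_locF
    (μp : ∀ q : Nat.Primes, MeasureTheory.Measure ℚ_[(q : ℕ)])
    (hHaar : ∀ q, (μp q).IsAddHaarMeasure)
    (hnorm : ∀ q, μp q {x : ℚ_[(q : ℕ)] | ‖x‖ ≤ 1} = 1)
    (μ : MeasureTheory.Measure FiniteAdele)
    (hμ : ∀ S : Finset Nat.Primes,
      ∀ B : ∀ q : Nat.Primes, Set ℚ_[(q : ℕ)], (∀ q, MeasurableSet (B q)) →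
      μ {x : FiniteAdele | (∀ q ∈ S, x.1 q ∈ B q) ∧ ∀ q ∉ S, ‖x.1 q‖ ≤ 1}
        = ∏ q ∈ S, μp q (B q))
    (T : Finset Nat.Primes) (f : ∀ q : Nat.Primes, ℚ_[(q : ℕ)] → ℂ)
    (hf : ∀ q ∈ T, Measurable (f q)) (h : FiniteAdele) :
    ∫ x, (∏' q : Nat.Primes, padicChar q (h.1 q * x.1 q)) * locF T f x ∂μ
      = locF T (fun q s => ∫ y, padicChar q (s * y) * f q y ∂(μp q)) h := by
  have hTT := subset_badSet T h
  have e : ∀ x, (∏' q : Nat.Primes, padicChar q (h.1 q * x.1 q)) * locF T f x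
      = locF (badSet T h) (fun q y => padicChar q (h.1 q * y)
          * (if q ∈ T then f q y else indZ q y)) x := by
    intro x
    rw [locF_enlarge hTT]
    unfold locF
    split_ifs with hx
    · rw [Finset.prod_mul_distrib, tprod_eq_prod (s := badSet T h)]
      · ring
      · intro q hq
        rw [padicChar_eq_one_iff, norm_mul]
        exact mul_le_one₀ (norm_le_of_notMem_badSet hq) (norm_nonneg _) (hx q hq)
    · simp
  simp only [e]
  rw [integral_locF μp hHaar μ hμ]
  · rw [locF_enlarge hTT, locF, if_pos (fun q hq => norm_le_of_notMem_badSet hq), mul_one]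
    refine Finset.prod_congr rfl fun q _ => ?_
    by_cases hq : q ∈ T
    · simp [hq]
    · have := hHaar q
      simp only [hq, if_false]
      exact integral_char_indZ (μp q) (hnorm q) _
  · intro q _
    refine Measurable.mul (measurable_padicChar.comp (measurable_const_mul _)) ?_
    by_cases hq : q ∈ T
    · simp only [hq, if_true]; exact hf q hq
    · simp only [hq, if_false]; exact measurable_indZ

lemma locF_mul (T : Finset Nat.Primes) (f g : ∀ q : Nat.Primes, ℚ_[(q : ℕ)] → ℂ)
    (x : FiniteAdele) : locF T f x * locF T g x = locF T (fun q y => f q y * g q y) x := by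
  unfold locF
  split_ifs
  · rw [Finset.prod_mul_distrib]; ring
  · simp

lemma measurable_of_locConst {A : ℚ_[p] → ℂ}
    (hA : IsLocallyConstant (fun y : {y : ℚ_[p] // y ≠ 0} => A y.1)) : Measurable A := by
  apply measurable_of_continuousOn_compl_singleton (0 : ℚ_[p])
  rw [continuousOn_iff_continuous_domRestrict]
  exact hA.continuous

lemma locConst_eventually {A : ℚ_[p] → ℂ}
    (hA : IsLocallyConstant (fun y : {y : ℚ_[p] // y ≠ 0} => A y.1)) (y : ℚ_[p]) (hy : y ≠ 0) :
    ∀ᶠ z in nhds y, A z = A y := by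
  have h := (IsLocallyConstant.iff_eventually_eq _).1 hA ⟨y, hy⟩
  rw [nhds_subtype_eq_comap, Filter.eventually_comap] at h
  filter_upwards [h, isOpen_ne.mem_nhds hy] with z hz hz0
  exact hz ⟨z, hz0⟩ rfl

lemma arg_ne_zero {k : ℕ} (hk : 1 ≤ k ∧ k ≤ p - 1) (j : ℤ) {η : ℚ_[p]} (hη : ‖η‖ ≤ 1) :
    (p : ℚ_[p]) ^ (-j) * η - (p : ℚ_[p]) ^ (-j - 1) * k ≠ 0 := by
  have hp := cast_p_ne_zero (p := p)
  have hp1 := (Fact.out : p.Prime).one_lt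
  intro h
  have e : (p : ℚ_[p]) ^ (-j) * η - (p : ℚ_[p]) ^ (-j - 1) * k
      = (p : ℚ_[p]) ^ (-j - 1) * (p * η - k) := by
    rw [zpow_sub₀ hp, zpow_one]; field_simp
  rw [e] at h
  have h2 : (p : ℚ_[p]) * η = k := by
    rcases mul_eq_zero.1 h with h | h
    · exact absurd h (zpow_ne_zero _ hp)
    · exact sub_eq_zero.1 h
  have h3 : ‖((k : ℤ) : ℚ_[p])‖ < 1 := by
    have : (((k : ℤ)) : ℚ_[p]) = k := by simp
    rw [this, ← h2, norm_mul, Padic.norm_p]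
    have hp1' : (1 : ℝ) < p := by exact_mod_cast hp1
    calc (p : ℝ)⁻¹ * ‖η‖ ≤ (p : ℝ)⁻¹ * 1 := by gcongr
      _ < 1 := by rw [mul_one]; exact inv_lt_one_of_one_lt₀ hp1'
  rw [Padic.norm_intCast_lt_one_iff] at h3
  have h4 : p ∣ k := by exact_mod_cast h3
  have := Nat.le_of_dvd (by omega) h4
  omega

/-- The symbol in the coordinate `η`. -/
def bLoc (A : ∀ q : Nat.Primes, ℚ_[(q : ℕ)] → ℂ) (k : Nat.Primes → ℕ) (j : Nat.Primes → ℤ)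
    (q : Nat.Primes) (η : ℚ_[(q : ℕ)]) : ℂ :=
  A q (((q : ℕ) : ℚ_[(q : ℕ)]) ^ (-(j q)) * η
              - ((q : ℕ) : ℚ_[(q : ℕ)]) ^ (-(j q) - 1) * (k q : ℚ_[(q : ℕ)]))

/-- The rescaled coordinate. -/
def tLoc (j : Nat.Primes → ℤ) (a : ∀ q : Nat.Primes, ℚ_[(q : ℕ)])
    (q : Nat.Primes) (x : ℚ_[(q : ℕ)]) : ℚ_[(q : ℕ)] :=
  ((q : ℕ) : ℚ_[(q : ℕ)]) ^ (-(j q)) * x - a q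

/-- The nonvanishing prefactor. -/
def cLoc (k : Nat.Primes → ℕ) (j : Nat.Primes → ℤ) (a : ∀ q : Nat.Primes, ℚ_[(q : ℕ)])
    (q : Nat.Primes) (x : ℚ_[(q : ℕ)]) : ℂ :=
  ((((q : ℕ) : ℝ) ^ ((j q : ℝ) / 2) : ℝ) : ℂ) *
    padicChar q ((k q : ℚ_[(q : ℕ)]) / ((q : ℕ) : ℚ_[(q : ℕ)]) * tLoc j a q x)

lemma cLoc_ne_zero (k : Nat.Primes → ℕ) (j : Nat.Primes → ℤ) (a : ∀ q : Nat.Primes, ℚ_[(q : ℕ)])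
    (q : Nat.Primes) (x : ℚ_[(q : ℕ)]) : cLoc k j a q x ≠ 0 := by
  unfold cLoc
  refine mul_ne_zero ?_ ?_
  · have : (0 : ℝ) < (q : ℕ) := by exact_mod_cast q.2.pos
    exact_mod_cast (Real.rpow_pos_of_pos this _).ne'
  · rw [← norm_ne_zero_iff, padicChar_norm]; exact one_ne_zero

lemma psi_eq (m : Nat.Primes) (S : Finset Nat.Primes)
    (hS : ∀ q : Nat.Primes, q ∈ S ↔ (q : ℕ) ≤ (m : ℕ))
    (k : Nat.Primes → ℕ) (j : Nat.Primes → ℤ) (a : ∀ q : Nat.Primes, ℚ_[(q : ℕ)])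
    (x : FiniteAdele) :
    PsiWav m k j a x = locF S (fun q => kozyrev q (k q) (j q) (a q)) x := by
  rw [← tprod_eq_locF]
  simp only [PsiWav, hS]

lemma symbA_eq (m : Nat.Primes) (S : Finset Nat.Primes)
    (hS : ∀ q : Nat.Primes, q ∈ S ↔ (q : ℕ) ≤ (m : ℕ))
    (A : ∀ q : Nat.Primes, ℚ_[(q : ℕ)] → ℂ) (x : FiniteAdele) :
    symbA m A x = locF S A x := by
  rw [← tprod_eq_locF]
  simp only [symbA, hS]

lemma psi_eq' (m : Nat.Primes) (S : Finset Nat.Primes)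
    (hS : ∀ q : Nat.Primes, q ∈ S ↔ (q : ℕ) ≤ (m : ℕ))
    (k : Nat.Primes → ℕ) (j : Nat.Primes → ℤ) (a : ∀ q : Nat.Primes, ℚ_[(q : ℕ)])
    (x : FiniteAdele) :
    PsiWav m k j a x
      = locF S (cLoc k j a) x * ∏ q ∈ S, indZ q (tLoc j a q (x.1 q)) := by
  rw [psi_eq m S hS]
  simp only [locF, kozyrev, Finset.prod_mul_distrib, cLoc, tLoc]
  ring

lemma op_eq
    (μp : ∀ q : Nat.Primes, MeasureTheory.Measure ℚ_[(q : ℕ)])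
    (hHaar : ∀ q, (μp q).IsAddHaarMeasure)
    (hnorm : ∀ q, μp q {x : ℚ_[(q : ℕ)] | ‖x‖ ≤ 1} = 1)
    (μ : MeasureTheory.Measure FiniteAdele)
    (hμ : ∀ S : Finset Nat.Primes,
      ∀ B : ∀ q : Nat.Primes, Set ℚ_[(q : ℕ)], (∀ q, MeasurableSet (B q)) →
      μ {x : FiniteAdele | (∀ q ∈ S, x.1 q ∈ B q) ∧ ∀ q ∉ S, ‖x.1 q‖ ≤ 1}
        = ∏ q ∈ S, μp q (B q))
    (m : Nat.Primes) (S : Finset Nat.Primes)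
    (hS : ∀ q : Nat.Primes, q ∈ S ↔ (q : ℕ) ≤ (m : ℕ))
    (A : ∀ q : Nat.Primes, ℚ_[(q : ℕ)] → ℂ)
    (hA : ∀ q ∈ S, Measurable (A q))
    (k : Nat.Primes → ℕ) (j : Nat.Primes → ℤ) (a : ∀ q : Nat.Primes, ℚ_[(q : ℕ)])
    (x : FiniteAdele) :
    FtildeInv μ (fun ξ => symbA m A ξ * Ftilde μ (PsiWav m k j a) ξ) x
      = locF S (cLoc k j a) x * ∏ q ∈ S, hatB (μp q) (bLoc A k j q) (tLoc j a q (x.1 q)) := by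
  have hF : ∀ ξ, Ftilde μ (PsiWav m k j a) ξ = locF S (fun q s => ∫ y, padicChar q (s * y)
      * kozyrev q (k q) (j q) (a q) y ∂(μp q)) ξ := by
    intro ξ
    rw [← fourier_locF μp hHaar hnorm μ hμ]
    · simp only [Ftilde, chiTilde, psi_eq m S hS]
    · intro q _
      unfold kozyrev
      refine Measurable.mul (Measurable.mul measurable_const ?_) ?_
      · exact measurable_padicChar.comp (by fun_prop)
      · exact measurable_indZ.comp (by fun_prop)
  let y : FiniteAdele := ⟨fun q => -x.1 q, by simpa using x.2⟩
  have h1 : FtildeInv μ (fun ξ => symbA m A ξ * Ftilde μ (PsiWav m k j a) ξ) x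
      = ∫ ξ, (∏' q : Nat.Primes, padicChar q (y.1 q * ξ.1 q)) * locF S (fun q s => A q s *
        ∫ y, padicChar q (s * y) * kozyrev q (k q) (j q) (a q) y ∂(μp q)) ξ ∂μ := by
    unfold FtildeInv
    congr 1
    ext ξ
    beta_reduce
    rw [hF, symbA_eq m S hS, locF_mul]
    congr 2
    ext q
    congr 1
    simp only [y]
    ring
  rw [h1, fourier_locF μp hHaar hnorm μ hμ]
  · have e : ∀ q ∈ S, (∫ ξ, padicChar q (y.1 q * ξ) * (A q ξ *
        ∫ y, padicChar q (ξ * y) * kozyrev q (k q) (j q) (a q) y ∂(μp q)) ∂(μp q))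
        = cLoc k j a q (x.1 q) * hatB (μp q) (bLoc A k j q) (tLoc j a q (x.1 q)) := by
      intro q _
      have := hHaar q
      exact local_G (μp q) (hnorm q) (A q) (k q) (j q) (a q) (x.1 q)
    simp only [locF]
    rw [Finset.prod_congr rfl e, Finset.prod_mul_distrib]
    simp only [y, norm_neg]
    ring
  · intro q hq
    have := hHaar q
    obtain ⟨κ, -, -, h⟩ := ft_kozyrev (μp q) (hnorm q) (k q) (j q) (a q)
    simp only [h]
    refine (hA q hq).mul (Measurable.mul (Measurable.mul measurable_const ?_) ?_)
    · exact measurable_padicChar.comp (by fun_prop)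
    · exact measurable_indZ.comp (by fun_prop)

lemma hat_of_const
    (μp : ∀ q : Nat.Primes, MeasureTheory.Measure ℚ_[(q : ℕ)])
    (hHaar : ∀ q, (μp q).IsAddHaarMeasure)
    (hnorm : ∀ q, μp q {x : ℚ_[(q : ℕ)] | ‖x‖ ≤ 1} = 1)
    (μ : MeasureTheory.Measure FiniteAdele)
    (hμ : ∀ S : Finset Nat.Primes,
      ∀ B : ∀ q : Nat.Primes, Set ℚ_[(q : ℕ)], (∀ q, MeasurableSet (B q)) →
      μ {x : FiniteAdele | (∀ q ∈ S, x.1 q ∈ B q) ∧ ∀ q ∉ S, ‖x.1 q‖ ≤ 1}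
        = ∏ q ∈ S, μp q (B q))
    (S : Finset Nat.Primes) (b : ∀ q : Nat.Primes, ℚ_[(q : ℕ)] → ℂ)
    (hb : ∀ q ∈ S, Measurable (b q)) (lam : ℂ)
    (h : ∀ η : ∀ q : Nat.Primes, ℚ_[(q : ℕ)], (∀ q, ‖η q‖ ≤ 1) → ∏ q ∈ S, b q (η q) = lam)
    (t : ∀ q : Nat.Primes, ℚ_[(q : ℕ)]) :
    ∏ q ∈ S, hatB (μp q) (b q) (t q) = lam * ∏ q ∈ S, indZ q (t q) := by
  have e1 : ∏ q ∈ S, indZ q (t q) = ∏ q ∈ S, hatB (μp q) (fun _ => 1) (t q) :=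
    Finset.prod_congr rfl fun q _ => by
      have := hHaar q
      rw [hatB_one _ (hnorm q)]
  have hm : ∀ q : Nat.Primes, Measurable (fun η : ℚ_[(q : ℕ)] => padicChar q (-t q * η)) :=
    fun q => measurable_padicChar.comp (by fun_prop)
  rw [e1]
  unfold hatB
  rw [← integral_locF μp hHaar μ hμ, ← integral_locF μp hHaar μ hμ, ← integral_const_mul]
  · congr 1
    ext x
    unfold locF
    split_ifs with hx
    · simp only [Finset.prod_mul_distrib, mul_one]
      by_cases hx' : ∀ q ∈ S, ‖x.1 q‖ ≤ 1
      · rw [h x.1 (fun q => by by_cases hq : q ∈ S; exacts [hx' q hq, hx q hq])]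
        ring
      · push Not at hx'
        obtain ⟨q, hq, hq'⟩ := hx'
        rw [Finset.prod_eq_zero (f := fun q : Nat.Primes => indZ q (x.1 q)) hq
          (by rw [indZ, if_neg hq'.not_ge])]
        simp
    · simp
  · intro q _
    exact ((hm q).mul measurable_const).mul measurable_indZ
  · intro q hq
    exact ((hm q).mul (hb q hq)).mul measurable_indZ

lemma const_of_hat
    (μp : ∀ q : Nat.Primes, MeasureTheory.Measure ℚ_[(q : ℕ)])
    (hHaar : ∀ q, (μp q).IsAddHaarMeasure)
    (hnorm : ∀ q, μp q {x : ℚ_[(q : ℕ)] | ‖x‖ ≤ 1} = 1)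
    (S : Finset Nat.Primes) (b : ∀ q : Nat.Primes, ℚ_[(q : ℕ)] → ℂ)
    (hb : ∀ q ∈ S, ∀ η, ‖η‖ ≤ 1 → ∀ᶠ y in nhds η, b q y = b q η) (lam : ℂ)
    (h : ∀ t : ∀ q : Nat.Primes, ℚ_[(q : ℕ)],
      ∏ q ∈ S, hatB (μp q) (b q) (t q) = lam * ∏ q ∈ S, indZ q (t q))
    (η : ∀ q : Nat.Primes, ℚ_[(q : ℕ)]) (hη : ∀ q, ‖η q‖ ≤ 1) :
    ∏ q ∈ S, b q (η q) = lam := by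
  have h1 : ∀ q : Nat.Primes, ∃ N : ℕ, q ∈ S →
      ∑ i ∈ Finset.range ((q : ℕ) ^ N), padicChar q (η q * (i / ((q : ℕ) : ℚ_[(q : ℕ)]) ^ N))
      * hatB (μp q) (b q) (i / ((q : ℕ) : ℚ_[(q : ℕ)]) ^ N) = b q (η q) := by
    intro q
    by_cases hq : q ∈ S
    · have := hHaar q
      obtain ⟨N, hN⟩ := exists_sum_hatB (μp q) (hnorm q) (hb q hq) (η q) (hη q)
      exact ⟨N, fun _ => hN⟩
    · exact ⟨0, fun h => absurd h hq⟩
  choose N hN using h1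
  have h2 : lam = lam * ∏ q ∈ S, ∑ i ∈ Finset.range ((q : ℕ) ^ (N q)),
      padicChar q (η q * (i / ((q : ℕ) : ℚ_[(q : ℕ)]) ^ (N q)))
      * indZ q (i / ((q : ℕ) : ℚ_[(q : ℕ)]) ^ (N q)) := by
    rw [Finset.prod_eq_one fun q _ => sum_indZ (η q) (N q), mul_one]
  rw [h2, ← Finset.prod_congr rfl hN, Finset.prod_sum, Finset.prod_sum, Finset.mul_sum]
  refine Finset.sum_congr rfl fun i _ => ?_
  rw [Finset.prod_mul_distrib, Finset.prod_mul_distrib]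
  have h3 := h (fun q => if hq : q ∈ S then
    ((i q hq : ℕ) : ℚ_[(q : ℕ)]) / ((q : ℕ) : ℚ_[(q : ℕ)]) ^ (N q) else 0)
  rw [← Finset.prod_attach S, ← Finset.prod_attach S (fun q => indZ q _)] at h3
  simp only [Finset.coe_mem, dite_true] at h3
  rw [h3]
  ring

lemma hat_of_ae
    (μp : ∀ q : Nat.Primes, MeasureTheory.Measure ℚ_[(q : ℕ)])
    (hHaar : ∀ q, (μp q).IsAddHaarMeasure)
    (μ : MeasureTheory.Measure FiniteAdele)
    (hμ : ∀ S : Finset Nat.Primes,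
      ∀ B : ∀ q : Nat.Primes, Set ℚ_[(q : ℕ)], (∀ q, MeasurableSet (B q)) →
      μ {x : FiniteAdele | (∀ q ∈ S, x.1 q ∈ B q) ∧ ∀ q ∉ S, ‖x.1 q‖ ≤ 1}
        = ∏ q ∈ S, μp q (B q))
    (S : Finset Nat.Primes) (b : ∀ q : Nat.Primes, ℚ_[(q : ℕ)] → ℂ)
    (k : Nat.Primes → ℕ) (j : Nat.Primes → ℤ) (a : ∀ q : Nat.Primes, ℚ_[(q : ℕ)]) (lam : ℂ)
    (h : ∀ᵐ x ∂μ, locF S (cLoc k j a) x * ∏ q ∈ S, hatB (μp q) (b q) (tLoc j a q (x.1 q))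
      = lam * (locF S (cLoc k j a) x * ∏ q ∈ S, indZ q (tLoc j a q (x.1 q))))
    (t : ∀ q : Nat.Primes, ℚ_[(q : ℕ)]) :
    ∏ q ∈ S, hatB (μp q) (b q) (t q) = lam * ∏ q ∈ S, indZ q (t q) := by
  let B : ∀ q : Nat.Primes, Set ℚ_[(q : ℕ)] := fun q => {x | ‖tLoc j a q x - t q‖ < 1}
  have hBo : ∀ q, IsOpen (B q) := fun q =>
    isOpen_lt (by unfold tLoc; fun_prop) continuous_const
  have h1 := hμ S B (fun q => (hBo q).measurableSet)
  have h2 : ∏ q ∈ S, μp q (B q) ≠ 0 := by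
    rw [Finset.prod_ne_zero_iff]
    intro q _
    have := hHaar q
    refine ((hBo q).measure_pos (μp q) ⟨((q : ℕ) : ℚ_[(q : ℕ)]) ^ (j q) * (t q + a q), ?_⟩).ne'
    have hp := cast_p_ne_zero (p := (q : ℕ))
    change ‖tLoc j a q _ - t q‖ < 1
    unfold tLoc
    rw [← mul_assoc, ← zpow_add₀ hp]
    simp
  have h3 : ∃ x : FiniteAdele, ((∀ q ∈ S, x.1 q ∈ B q) ∧ ∀ q ∉ S, ‖x.1 q‖ ≤ 1) ∧
      locF S (cLoc k j a) x * ∏ q ∈ S, hatB (μp q) (b q) (tLoc j a q (x.1 q))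
      = lam * (locF S (cLoc k j a) x * ∏ q ∈ S, indZ q (tLoc j a q (x.1 q))) := by
    by_contra hcon
    push Not at hcon
    apply h2
    rw [← h1]
    exact measure_mono_null (fun x hx => hcon x hx) h
  obtain ⟨x, ⟨hx1, hx2⟩, hx⟩ := h3
  have hc : locF S (cLoc k j a) x ≠ 0 := by
    unfold locF
    rw [if_pos hx2, mul_one, Finset.prod_ne_zero_iff]
    exact fun q _ => cLoc_ne_zero k j a q _
  have e1 : ∏ q ∈ S, hatB (μp q) (b q) (t q)
      = ∏ q ∈ S, hatB (μp q) (b q) (tLoc j a q (x.1 q)) := by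
    refine Finset.prod_congr rfl fun q hq => ?_
    have := hHaar q
    rw [← hatB_periodic (μp q) (b q) (t q) _ (le_of_lt (hx1 q hq))]
    simp
  have e2 : ∏ q ∈ S, indZ q (t q) = ∏ q ∈ S, indZ q (tLoc j a q (x.1 q)) := by
    refine Finset.prod_congr rfl fun q hq => ?_
    rw [← indZ_periodic (t q) _ (le_of_lt (hx1 q hq))]
    simp
  rw [e1, e2]
  apply mul_left_cancel₀ hc
  rw [hx]; ring

end Adelic

/-- The wavelet `Ψ` is an eigenfunction of the pseudo-differential
operator `A = 𝓕̃⁻¹ ∘ 𝒜 ∘ 𝓕̃` if and only if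
`∏_{q ≤ m} 𝒜_q(q^{-j_q}η_q - q^{-j_q-1}k_q) = ∏_{q ≤ m} 𝒜_q(-q^{-j_q-1}k_q)` for all
`η_q ∈ ℤ_q`, and in that case the eigenvalue is `λ = ∏_{q ≤ m} 𝒜_q(-q^{-j_q-1}k_q)`.
`μ` is the Haar measure on `Ã` normalized as the product of the Haar measures `μ_p` with
`μ_p(ℤ_p) = 1`, and `S` is the finite set of primes `q ≤ m`. -/
theorem wavelet_eigenfunction_iff
    (μp : ∀ q : Nat.Primes, MeasureTheory.Measure ℚ_[(q : ℕ)])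
    (hHaar : ∀ q, (μp q).IsAddHaarMeasure)
    (hnorm : ∀ q, μp q {x : ℚ_[(q : ℕ)] | ‖x‖ ≤ 1} = 1)
    (μ : MeasureTheory.Measure FiniteAdele)
    (hμ : ∀ S : Finset Nat.Primes,
      ∀ B : ∀ q : Nat.Primes, Set ℚ_[(q : ℕ)], (∀ q, MeasurableSet (B q)) →
      μ {x : FiniteAdele | (∀ q ∈ S, x.1 q ∈ B q) ∧ ∀ q ∉ S, ‖x.1 q‖ ≤ 1}
        = ∏ q ∈ S, μp q (B q))
    (m : Nat.Primes) (S : Finset Nat.Primes)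
    (hS : ∀ q : Nat.Primes, q ∈ S ↔ (q : ℕ) ≤ (m : ℕ))
    (A : ∀ q : Nat.Primes, ℚ_[(q : ℕ)] → ℂ)
    (hA : ∀ q : Nat.Primes, (q : ℕ) ≤ (m : ℕ) →
      IsLocallyConstant (fun y : {y : ℚ_[(q : ℕ)] // y ≠ 0} => A q y.1))
    (k : Nat.Primes → ℕ) (j : Nat.Primes → ℤ) (a : ∀ q : Nat.Primes, ℚ_[(q : ℕ)])
    (hk : ∀ q : Nat.Primes, (q : ℕ) ≤ (m : ℕ) → 1 ≤ k q ∧ k q ≤ (q : ℕ) - 1)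
    (hj : ∀ q : Nat.Primes, (q : ℕ) ≤ (m : ℕ) → 0 ≤ j q)
    (ha : ∀ q : Nat.Primes, (q : ℕ) ≤ (m : ℕ) → a q ∈ Ip q) :
    ((∃ lam : ℂ,
        FtildeInv μ (fun ξ => symbA m A ξ * Ftilde μ (PsiWav m k j a) ξ)
          =ᵐ[μ] fun x => lam * PsiWav m k j a x)
      ↔ (∀ η : ∀ q : Nat.Primes, ℚ_[(q : ℕ)], (∀ q, ‖η q‖ ≤ 1) →
          ∏ q ∈ S, A q (((q : ℕ) : ℚ_[(q : ℕ)]) ^ (-(j q)) * η q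
              - ((q : ℕ) : ℚ_[(q : ℕ)]) ^ (-(j q) - 1) * (k q : ℚ_[(q : ℕ)]))
            = ∏ q ∈ S, A q (-(((q : ℕ) : ℚ_[(q : ℕ)]) ^ (-(j q) - 1)
                * (k q : ℚ_[(q : ℕ)]))))) ∧
    ((∀ η : ∀ q : Nat.Primes, ℚ_[(q : ℕ)], (∀ q, ‖η q‖ ≤ 1) →
        ∏ q ∈ S, A q (((q : ℕ) : ℚ_[(q : ℕ)]) ^ (-(j q)) * η q
            - ((q : ℕ) : ℚ_[(q : ℕ)]) ^ (-(j q) - 1) * (k q : ℚ_[(q : ℕ)]))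
          = ∏ q ∈ S, A q (-(((q : ℕ) : ℚ_[(q : ℕ)]) ^ (-(j q) - 1)
              * (k q : ℚ_[(q : ℕ)])))) →
      FtildeInv μ (fun ξ => symbA m A ξ * Ftilde μ (PsiWav m k j a) ξ)
        =ᵐ[μ] fun x =>
          (∏ q ∈ S, A q (-(((q : ℕ) : ℚ_[(q : ℕ)]) ^ (-(j q) - 1)
            * (k q : ℚ_[(q : ℕ)])))) * PsiWav m k j a x) := by
  have hAm : ∀ q ∈ S, Measurable (A q) := fun q hq =>
    measurable_of_locConst (hA q ((hS q).1 hq))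
  have hbm : ∀ q ∈ S, Measurable (bLoc A k j q) := fun q hq =>
    (hAm q hq).comp (by fun_prop)
  have hbl : ∀ q ∈ S, ∀ η, ‖η‖ ≤ 1 → ∀ᶠ y in nhds η, bLoc A k j q y = bLoc A k j q η := by
    intro q hq η hη
    have h1 := locConst_eventually (hA q ((hS q).1 hq)) _
      (arg_ne_zero (hk q ((hS q).1 hq)) (j q) hη)
    have hcont : Continuous (fun η : ℚ_[(q : ℕ)] => ((q : ℕ) : ℚ_[(q : ℕ)]) ^ (-(j q)) * η
              - ((q : ℕ) : ℚ_[(q : ℕ)]) ^ (-(j q) - 1) * (k q : ℚ_[(q : ℕ)])) := by fun_prop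
    exact hcont.continuousAt.eventually h1
  have hop := op_eq μp hHaar hnorm μ hμ m S hS A hAm k j a
  have hpsi := psi_eq' m S hS k j a
  have key : (∀ η : ∀ q : Nat.Primes, ℚ_[(q : ℕ)], (∀ q, ‖η q‖ ≤ 1) →
        ∏ q ∈ S, A q (((q : ℕ) : ℚ_[(q : ℕ)]) ^ (-(j q)) * η q
            - ((q : ℕ) : ℚ_[(q : ℕ)]) ^ (-(j q) - 1) * (k q : ℚ_[(q : ℕ)]))
          = ∏ q ∈ S, A q (-(((q : ℕ) : ℚ_[(q : ℕ)]) ^ (-(j q) - 1)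
              * (k q : ℚ_[(q : ℕ)])))) →
      FtildeInv μ (fun ξ => symbA m A ξ * Ftilde μ (PsiWav m k j a) ξ)
        =ᵐ[μ] fun x =>
          (∏ q ∈ S, A q (-(((q : ℕ) : ℚ_[(q : ℕ)]) ^ (-(j q) - 1)
            * (k q : ℚ_[(q : ℕ)])))) * PsiWav m k j a x := by
    intro h
    refine Filter.Eventually.of_forall fun x => ?_
    have h2 := hat_of_const μp hHaar hnorm μ hμ S (bLoc A k j) hbm _ h
      (fun q => tLoc j a q (x.1 q))
    simp only [hop, hpsi]
    rw [h2]; ring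
  refine ⟨⟨?_, fun h => ⟨_, key h⟩⟩, key⟩
  rintro ⟨lam, h⟩ η hη
  have h1 := hat_of_ae μp hHaar μ hμ S (bLoc A k j) k j a lam (by
    filter_upwards [h] with x hx
    rw [hop, hpsi] at hx
    exact hx)
  have h2 := const_of_hat μp hHaar hnorm S (bLoc A k j) hbl lam h1
  have h3 := h2 η hη
  have h4 := h2 (fun _ => 0) (by simp)
  simp only [bLoc, mul_zero, zero_sub] at h3 h4
  rw [h3, h4]
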